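/- Fix any r ∈ (0, 1/2) and any matrix X₀ ∈ ℝ^{n×p}. Over the set Γ ∩ {w : ‖w‖ ≤ r}, the matrix-valued function w ↦ ∇²g(w; X₀) is L-Lipschitz with respect to the spectral norm, with L ≤ (4 n²/μ²)‖X₀‖_∞³ + (4 n/μ)‖X₀‖_∞² + (8√2 √n/μ)‖X₀‖_∞² + 8 ‖X₀‖_∞. -/

import Mathlib

open MeasureTheory ProbabilityTheory Real Matrix
open scoped RealInnerProductSpace ENNReal NNReal

noncomputable section

/-- The Bernoulli–Gaussian law `BG(θ)`: with probability `θ` a standard Gaussian,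
with probability `1-θ` a point mass at `0`. -/
def bg (θ : ℝ) : Measure ℝ :=
  θ.toNNReal • gaussianReal 0 1 + (1 - θ).toNNReal • Measure.dirac 0

instance bg.instIsFiniteMeasure (θ : ℝ) : IsFiniteMeasure (bg θ) := by
  unfold bg; infer_instance

/-- Law of an `n × p` matrix with i.i.d. `BG(θ)` entries. -/
def bgMatrix (θ : ℝ) (n p : ℕ) : Measure (Fin n → Fin p → ℝ) :=
  Measure.pi fun _ => Measure.pi fun _ => bg θ

/-- Law of a vector in `ℝ^n` with i.i.d. `BG(θ)` entries. -/
def bgVec (θ : ℝ) (n : ℕ) : Measure (Fin n → ℝ) :=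
  Measure.pi fun _ => bg θ

/-- The smooth sparsity surrogate `h_μ(z) = μ log cosh (z/μ)`. -/
def hmu (μ z : ℝ) : ℝ := μ * Real.log (Real.cosh (z / μ))

/-- Reparametrization `q(w) = (w, √(1-‖w‖²))` with `w` in the unit ball of `ℝ^{n-1}`. -/
def qmap (n : ℕ) (w : EuclideanSpace ℝ (Fin (n - 1))) : Fin n → ℝ :=
  fun i => if h : (i : ℕ) < n - 1 then w ⟨i, h⟩ else Real.sqrt (1 - ‖w‖ ^ 2)

/-- `f(q; Y) = (1/p) ∑ₖ h_μ(qᵀ yₖ)`. -/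
def ffun (n p : ℕ) (μ : ℝ) (Y : Matrix (Fin n) (Fin p) ℝ)
    (q : EuclideanSpace ℝ (Fin n)) : ℝ :=
  (p : ℝ)⁻¹ * ∑ k : Fin p, hmu μ (∑ i : Fin n, q i * Y i k)

/-- `g(w; Y) = f(q(w); Y)`. -/
def gfun (n p : ℕ) (μ : ℝ) (Y : Matrix (Fin n) (Fin p) ℝ)
    (w : EuclideanSpace ℝ (Fin (n - 1))) : ℝ :=
  (p : ℝ)⁻¹ * ∑ k : Fin p, hmu μ (∑ i : Fin n, qmap n w i * Y i k)

/-- Gradient `∇g(w; Y)` in `w`. -/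
def gradg (n p : ℕ) (μ : ℝ) (Y : Matrix (Fin n) (Fin p) ℝ)
    (w : EuclideanSpace ℝ (Fin (n - 1))) : EuclideanSpace ℝ (Fin (n - 1)) :=
  gradient (gfun n p μ Y) w

/-- Hessian `∇²g(w; Y)` in `w`, as a continuous linear map. -/
def hessg (n p : ℕ) (μ : ℝ) (Y : Matrix (Fin n) (Fin p) ℝ)
    (w : EuclideanSpace ℝ (Fin (n - 1))) :
    EuclideanSpace ℝ (Fin (n - 1)) →L[ℝ] EuclideanSpace ℝ (Fin (n - 1)) :=
  fderiv ℝ (gradg n p μ Y) w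

/-- The set `Γ = {w : ‖w‖ < √((4n-1)/(4n))}`. -/
def GammaSet (n : ℕ) : Set (EuclideanSpace ℝ (Fin (n - 1))) :=
  {w | ‖w‖ < Real.sqrt ((4 * (n : ℝ) - 1) / (4 * n))}

/-- Spectral (`ℓ²→ℓ²` operator) norm of а matrix. -/
def specNorm {m k : ℕ} (M : Matrix (Fin m) (Fin k) ℝ) : ℝ :=
  ‖LinearMap.toContinuousLinearMap (Matrix.toEuclideanLin M)‖

/-- Largest magnitude of an entry of a matrix. -/
def Minf {m k : ℕ} (M : Matrix (Fin m) (Fin k) ℝ) : ℝ := ⨆ i, ⨆ j, |M i j|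

/-- Condition number: ratio of largest to smallest singular value. -/
def kappa {n : ℕ} (s : Fin n → ℝ) : ℝ := (⨆ i, s i) / (⨅ i, s i)

/-- Signed standard basis vectors `{± e_i}` of `ℝ^n`. -/
def SignedBasis (n : ℕ) : Set (EuclideanSpace ℝ (Fin n)) :=
  {b | ∃ i : Fin n, b = EuclideanSpace.single i (1 : ℝ) ∨ b = -EuclideanSpace.single i (1 : ℝ)}

/-- Set of local minimizers of `f(·; Y)` over the unit sphere `S^{n-1}`. -/
def LocalMins (n p : ℕ) (μ : ℝ) (Y : Matrix (Fin n) (Fin p) ℝ) :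
    Set (EuclideanSpace ℝ (Fin n)) :=
  {q | q ∈ Metric.sphere (0 : EuclideanSpace ℝ (Fin n)) 1 ∧
       IsLocalMinOn (ffun n p μ Y) (Metric.sphere (0 : EuclideanSpace ℝ (Fin n)) 1) q}

/-- Expected objective `E_x[h_μ(q(w)ᵀ x)]` for `x` with i.i.d. `BG(θ)` entries. -/
def Gexp (n : ℕ) (θ μ : ℝ) (w : EuclideanSpace ℝ (Fin (n - 1))) : ℝ :=
  ∫ x, hmu μ (∑ i : Fin n, qmap n w i * x i) ∂(bgVec θ n)

lemma Real.hasDerivAt_tanh (x : ℝ) : HasDerivAt Real.tanh (1 - Real.tanh x ^ 2) x := by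
  have h := (Real.hasDerivAt_sinh x).div (Real.hasDerivAt_cosh x) (Real.cosh_pos x).ne'
  have hfun : Real.tanh = Real.sinh / Real.cosh :=
    funext fun y => Real.tanh_eq_sinh_div_cosh y
  rw [← hfun] at h
  refine h.congr_deriv ?_
  rw [Real.tanh_eq_sinh_div_cosh]
  have := (Real.cosh_pos x).ne'
  field_simp

lemma Real.abs_tanh_sub_tanh_le (x y : ℝ) : |Real.tanh x - Real.tanh y| ≤ |x - y| := by
  have h : LipschitzWith 1 Real.tanh :=
    lipschitzWith_of_nnnorm_deriv_le (fun z => (Real.hasDerivAt_tanh z).differentiableAt)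
      fun z => by
        rw [(Real.hasDerivAt_tanh z).deriv, ← NNReal.coe_le_coe, coe_nnnorm, Real.norm_eq_abs,
          abs_of_nonneg (by linarith [Real.tanh_sq_lt_one z])]
        simpa using sq_nonneg (Real.tanh z)
  simpa [Real.norm_eq_abs] using h.norm_sub_le x y

lemma hasDerivAt_hmu {μ : ℝ} (hμ : 0 < μ) (z : ℝ) :
    HasDerivAt (hmu μ) (Real.tanh (z / μ)) z := by
  have h := ((((hasDerivAt_id z).div_const μ).cosh).log (Real.cosh_pos _).ne').const_mul μ
  refine h.congr_deriv ?_
  rw [Real.tanh_eq_sinh_div_cosh]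
  simp only [id]
  field_simp

lemma norm_smul_sub_smul_le {F : Type*} [NormedAddCommGroup F] [NormedSpace ℝ F]
    (a b : ℝ) (A B : F) : ‖a • A - b • B‖ ≤ |a - b| * ‖A‖ + |b| * ‖A - B‖ := by
  have h : a • A - b • B = (a - b) • A + b • (A - B) := by module
  rw [h]
  refine (norm_add_le _ _).trans_eq ?_
  rw [norm_smul, norm_smul, Real.norm_eq_abs, Real.norm_eq_abs]

section Height

variable {E : Type*} [NormedAddCommGroup E]

/-- Height `√(1 - ‖w‖²)` of the upper hemisphere above `w`. -/
def hemiHeight (w : E) : ℝ := Real.sqrt (1 - ‖w‖ ^ 2)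

lemma hemiHeight_pos {w : E} (hw : ‖w‖ < 1) : 0 < hemiHeight w :=
  Real.sqrt_pos.2 (by nlinarith [norm_nonneg w])

lemma hemiHeight_sq {w : E} (hw : ‖w‖ < 1) : hemiHeight w ^ 2 = 1 - ‖w‖ ^ 2 :=
  Real.sq_sqrt (by nlinarith [norm_nonneg w])

variable {w w' : E}

lemma hemiHeight_gt (hw : ‖w‖ < 1 / 2) : 43 / 50 < hemiHeight w := by
  refine Real.lt_sqrt_of_sq_lt ?_
  nlinarith [norm_nonneg w]

lemma inv_hemiHeight_le (hw : ‖w‖ < 1 / 2) : (hemiHeight w)⁻¹ ≤ 7 / 6 := by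
  rw [inv_le_comm₀ (by linarith [hemiHeight_gt hw]) (by norm_num)]
  linarith [hemiHeight_gt hw]

lemma abs_hemiHeight_sub_le (hw : ‖w‖ < 1 / 2) (hw' : ‖w'‖ < 1 / 2) :
    |hemiHeight w - hemiHeight w'| ≤ 3 / 5 * ‖w - w'‖ := by
  have h1 := hemiHeight_gt hw
  have h2 := hemiHeight_gt hw'
  have h3 := abs_norm_sub_norm_le w w'
  have hmul : |hemiHeight w - hemiHeight w'| * (hemiHeight w + hemiHeight w')
      = |‖w‖ - ‖w'‖| * (‖w‖ + ‖w'‖) := by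
    rw [← abs_of_pos (by linarith : 0 < hemiHeight w + hemiHeight w'), ← abs_mul,
      ← abs_of_nonneg (by positivity : 0 ≤ ‖w‖ + ‖w'‖), ← abs_mul, ← abs_neg]
    congr 1
    linear_combination hemiHeight_sq (hw'.trans (by norm_num)) -
      hemiHeight_sq (hw.trans (by norm_num))
  nlinarith [abs_nonneg (hemiHeight w - hemiHeight w'), abs_nonneg (‖w‖ - ‖w'‖)]

lemma abs_inv_hemiHeight_sub_le (hw : ‖w‖ < 1 / 2) (hw' : ‖w'‖ < 1 / 2) :
    |(hemiHeight w)⁻¹ - (hemiHeight w')⁻¹| ≤ 5 / 6 * ‖w - w'‖ := by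
  have h1 := hemiHeight_gt hw
  have h2 := hemiHeight_gt hw'
  have h3 := abs_hemiHeight_sub_le hw hw'
  have hi := inv_hemiHeight_le hw
  have hi' := inv_hemiHeight_le hw'
  have hp : 0 < (hemiHeight w)⁻¹ := inv_pos.2 (by linarith)
  have hp' : 0 < (hemiHeight w')⁻¹ := inv_pos.2 (by linarith)
  have heq : (hemiHeight w)⁻¹ - (hemiHeight w')⁻¹
      = -((hemiHeight w)⁻¹ * (hemiHeight w')⁻¹ * (hemiHeight w - hemiHeight w')) := by
    have : hemiHeight w ≠ 0 := by linarith
    have : hemiHeight w' ≠ 0 := by linarith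
    field_simp
    ring
  rw [heq, abs_neg, abs_mul, abs_of_pos (mul_pos hp hp')]
  calc (hemiHeight w)⁻¹ * (hemiHeight w')⁻¹ * |hemiHeight w - hemiHeight w'|
      ≤ 7 / 6 * (7 / 6) * (3 / 5 * ‖w - w'‖) := by gcongr
    _ ≤ 5 / 6 * ‖w - w'‖ := by nlinarith [norm_nonneg (w - w')]

end Height

section InnerProduct

variable {E : Type*} [NormedAddCommGroup E] [InnerProductSpace ℝ E]

lemma norm_rankOne_self_sub_rankOne_self_le (u v : E) :
    ‖InnerProductSpace.rankOne ℝ u u - InnerProductSpace.rankOne ℝ v v‖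
      ≤ (‖u‖ + ‖v‖) * ‖u - v‖ := by
  have h : InnerProductSpace.rankOne ℝ u u - InnerProductSpace.rankOne ℝ v v
      = InnerProductSpace.rankOne ℝ (u - v) u + InnerProductSpace.rankOne ℝ v (u - v) := by
    ext e
    simp
  rw [h]
  refine (norm_add_le _ _).trans_eq ?_
  rw [InnerProductSpace.norm_rankOne, InnerProductSpace.norm_rankOne]
  ring

/-- The gnomonic coordinate `w / √(1 - ‖w‖²)`. -/
def gnomonic (w : E) : E := (hemiHeight w)⁻¹ • w

/-- Derivative of the gnomonic coordinate. -/
def gnomonicDeriv (w : E) : E →L[ℝ] E :=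
  (hemiHeight w)⁻¹ •
    (ContinuousLinearMap.id ℝ E + InnerProductSpace.rankOne ℝ (gnomonic w) (gnomonic w))

lemma hasFDerivAt_hemiHeight {w : E} (hw : ‖w‖ < 1) :
    HasFDerivAt hemiHeight (-innerSL ℝ (gnomonic w)) w := by
  have h0 : (1 : ℝ) - ‖w‖ ^ 2 ≠ 0 := by nlinarith [norm_nonneg w]
  have h := (((hasFDerivAt_id w).norm_sq).const_sub 1).sqrt h0
  refine h.congr_fderiv ?_
  have hs := hemiHeight_pos hw
  ext e
  simp only [id, gnomonic, _root_.smul_apply, _root_.neg_apply, ContinuousLinearMap.comp_apply,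
    ContinuousLinearMap.id_apply, innerSL_apply_apply, real_inner_smul_left, smul_eq_mul,
    nsmul_eq_mul]
  change 1 / (2 * hemiHeight w) * _ = _
  push_cast
  field_simp

lemma hasFDerivAt_gnomonic {w : E} (hw : ‖w‖ < 1) :
    HasFDerivAt gnomonic (gnomonicDeriv w) w := by
  have hs := hemiHeight_pos hw
  have h := ((hasDerivAt_inv hs.ne').comp_hasFDerivAt w (hasFDerivAt_hemiHeight hw)).smul
    (hasFDerivAt_id w)
  refine h.congr_fderiv ?_
  ext1 e
  simp only [gnomonicDeriv, gnomonic, Function.comp, id, _root_.add_apply,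
    _root_.smul_apply, ContinuousLinearMap.smulRight_apply,
    _root_.neg_apply, innerSL_apply_apply, InnerProductSpace.rankOne_apply,
    ContinuousLinearMap.id_apply, real_inner_smul_left, smul_eq_mul]
  rw [smul_add, smul_smul, smul_smul]
  congr 2
  field_simp

section Bounds

variable {w w' : E}

lemma norm_gnomonic_le (hw : ‖w‖ < 1 / 2) : ‖gnomonic w‖ ≤ 3 / 5 := by
  have hp : 0 < (hemiHeight w)⁻¹ := inv_pos.2 (by linarith [hemiHeight_gt hw])
  rw [gnomonic, norm_smul, Real.norm_eq_abs, abs_of_pos hp]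
  nlinarith [inv_hemiHeight_le hw, norm_nonneg w]

lemma norm_gnomonic_sub_le (hw : ‖w‖ < 1 / 2) (hw' : ‖w'‖ < 1 / 2) :
    ‖gnomonic w - gnomonic w'‖ ≤ 8 / 5 * ‖w - w'‖ := by
  have hp' : 0 < (hemiHeight w')⁻¹ := inv_pos.2 (by linarith [hemiHeight_gt hw'])
  refine (norm_smul_sub_smul_le _ _ _ _).trans ?_
  rw [abs_of_pos hp']
  calc |(hemiHeight w)⁻¹ - (hemiHeight w')⁻¹| * ‖w‖ + (hemiHeight w')⁻¹ * ‖w - w'‖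
      ≤ 5 / 6 * ‖w - w'‖ * (1 / 2) + 7 / 6 * ‖w - w'‖ := by
        gcongr
        exacts [abs_inv_hemiHeight_sub_le hw hw', inv_hemiHeight_le hw']
    _ ≤ 8 / 5 * ‖w - w'‖ := by nlinarith [norm_nonneg (w - w')]

lemma norm_id_add_rankOne_gnomonic_le (hw : ‖w‖ < 1 / 2) :
    ‖ContinuousLinearMap.id ℝ E + InnerProductSpace.rankOne ℝ (gnomonic w) (gnomonic w)‖
      ≤ 34 / 25 := by
  refine (norm_add_le _ _).trans ?_
  rw [InnerProductSpace.norm_rankOne]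
  nlinarith [ContinuousLinearMap.norm_id_le (𝕜 := ℝ) (E := E), norm_gnomonic_le hw,
    norm_nonneg (gnomonic w)]

lemma norm_gnomonicDeriv_le (hw : ‖w‖ < 1 / 2) : ‖gnomonicDeriv w‖ ≤ 8 / 5 := by
  have hp : 0 < (hemiHeight w)⁻¹ := inv_pos.2 (by linarith [hemiHeight_gt hw])
  rw [gnomonicDeriv, norm_smul, Real.norm_eq_abs, abs_of_pos hp]
  calc _ ≤ (7 / 6 : ℝ) * (34 / 25) := by
        gcongr
        exacts [inv_hemiHeight_le hw, norm_id_add_rankOne_gnomonic_le hw]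
    _ ≤ 8 / 5 := by norm_num

lemma norm_gnomonicDeriv_sub_le (hw : ‖w‖ < 1 / 2) (hw' : ‖w'‖ < 1 / 2) :
    ‖gnomonicDeriv w - gnomonicDeriv w'‖ ≤ 4 * ‖w - w'‖ := by
  have hp' : 0 < (hemiHeight w')⁻¹ := inv_pos.2 (by linarith [hemiHeight_gt hw'])
  refine (norm_smul_sub_smul_le _ _ _ _).trans ?_
  rw [abs_of_pos hp', add_sub_add_left_eq_sub]
  have hrank := norm_rankOne_self_sub_rankOne_self_le (gnomonic w) (gnomonic w')
  calc _ ≤ 5 / 6 * ‖w - w'‖ * (34 / 25) + 7 / 6 * ((3 / 5 + 3 / 5) * (8 / 5 * ‖w - w'‖)) := by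
        refine add_le_add (mul_le_mul (abs_inv_hemiHeight_sub_le hw hw')
          (norm_id_add_rankOne_gnomonic_le hw) (norm_nonneg _) (by positivity))
          (mul_le_mul (inv_hemiHeight_le hw') (hrank.trans ?_) (norm_nonneg _) (by norm_num))
        gcongr
        exacts [norm_gnomonic_le hw, norm_gnomonic_le hw', norm_gnomonic_sub_le hw hw']
    _ ≤ 4 * ‖w - w'‖ := by nlinarith [norm_nonneg (w - w')]

end Bounds

/-- The inner product of `(x, b)` with the hemisphere point above `w`. -/
def hemiInner (x : E) (b : ℝ) (w : E) : ℝ := inner ℝ x w + b * hemiHeight w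

/-- Gradient of `hemiInner`. -/
def hemiInnerGrad (x : E) (b : ℝ) (w : E) : E := x - b • gnomonic w

/-- Gradient of `w ↦ h_μ (hemiInner x b w)`. -/
def sampleGrad (μ : ℝ) (x : E) (b : ℝ) (w : E) : E :=
  Real.tanh (hemiInner x b w / μ) • hemiInnerGrad x b w

/-- Hessian of `w ↦ h_μ (hemiInner x b w)`. -/
def sampleHess (μ : ℝ) (x : E) (b : ℝ) (w : E) : E →L[ℝ] E :=
  ((1 - Real.tanh (hemiInner x b w / μ) ^ 2) / μ) •
      InnerProductSpace.rankOne ℝ (hemiInnerGrad x b w) (hemiInnerGrad x b w)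
    - (Real.tanh (hemiInner x b w / μ) * b) • gnomonicDeriv w

lemma hasFDerivAt_hemiInner (x : E) (b : ℝ) {w : E} (hw : ‖w‖ < 1) :
    HasFDerivAt (hemiInner x b) (innerSL ℝ (hemiInnerGrad x b w)) w := by
  have h := ((innerSL ℝ x).hasFDerivAt (x := w)).add ((hasFDerivAt_hemiHeight hw).const_mul b)
  refine h.congr_fderiv ?_
  ext e
  simp [hemiInnerGrad, sub_eq_add_neg]

lemma hasFDerivAt_hmu_hemiInner {μ : ℝ} (hμ : 0 < μ) (x : E) (b : ℝ) {w : E} (hw : ‖w‖ < 1) :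
    HasFDerivAt (fun v => hmu μ (hemiInner x b v)) (innerSL ℝ (sampleGrad μ x b w)) w := by
  refine ((hasDerivAt_hmu hμ _).comp_hasFDerivAt w (hasFDerivAt_hemiInner x b hw)).congr_fderiv ?_
  ext e
  simp [sampleGrad]

lemma hasFDerivAt_sampleGrad (μ : ℝ) (x : E) (b : ℝ) {w : E} (hw : ‖w‖ < 1) :
    HasFDerivAt (sampleGrad μ x b) (sampleHess μ x b w) w := by
  have ht := (((Real.hasDerivAt_tanh _).comp (hemiInner x b w)
    ((hasDerivAt_id _).div_const μ))).comp_hasFDerivAt w (hasFDerivAt_hemiInner x b hw)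
  have hv := ((hasFDerivAt_gnomonic hw).const_smul b).const_sub x
  refine (ht.smul hv).congr_fderiv ?_
  ext1 e
  simp only [sampleHess, Function.comp, id, _root_.add_apply,
    _root_.sub_apply,
    _root_.smul_apply, ContinuousLinearMap.smulRight_apply,
    _root_.neg_apply, innerSL_apply_apply, InnerProductSpace.rankOne_apply,
    smul_eq_mul]
  change _ + ((1 - Real.tanh (hemiInner x b w / μ) ^ 2) * (1 / μ) *
    inner ℝ (hemiInnerGrad x b w) e) • hemiInnerGrad x b w = _
  module

lemma norm_hemiInnerGrad_le {x : E} {b M B : ℝ} (hb : |b| ≤ M) (hB : ‖x‖ + 3 / 5 * M ≤ B)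
    {w : E} (hw : ‖w‖ < 1 / 2) : ‖hemiInnerGrad x b w‖ ≤ B := by
  refine (norm_sub_le _ _).trans ?_
  rw [norm_smul, Real.norm_eq_abs]
  nlinarith [norm_gnomonic_le hw, abs_nonneg b, norm_nonneg (gnomonic w)]

lemma norm_hemiInnerGrad_sub_le {x : E} {b M : ℝ} (hb : |b| ≤ M) {w w' : E}
    (hw : ‖w‖ < 1 / 2) (hw' : ‖w'‖ < 1 / 2) :
    ‖hemiInnerGrad x b w - hemiInnerGrad x b w'‖ ≤ M * (8 / 5 * ‖w - w'‖) := by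
  rw [hemiInnerGrad, hemiInnerGrad, sub_sub_sub_cancel_left, ← smul_sub, norm_smul,
    Real.norm_eq_abs, norm_sub_rev]
  exact mul_le_mul hb (norm_gnomonic_sub_le hw hw') (norm_nonneg _) ((abs_nonneg b).trans hb)

lemma abs_hemiInner_sub_le {x : E} {b M B : ℝ} (hb : |b| ≤ M) (hB : ‖x‖ + 3 / 5 * M ≤ B)
    {w w' : E} (hw : ‖w‖ < 1 / 2) (hw' : ‖w'‖ < 1 / 2) :
    |hemiInner x b w - hemiInner x b w'| ≤ B * ‖w - w'‖ := by
  have heq : hemiInner x b w - hemiInner x b w'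
      = inner ℝ x (w - w') + b * (hemiHeight w - hemiHeight w') := by
    rw [hemiInner, hemiInner, inner_sub_right]
    ring
  rw [heq]
  refine (abs_add_le _ _).trans ?_
  rw [abs_mul]
  have h1 := abs_real_inner_le_norm x (w - w')
  have h2 := mul_le_mul hb (abs_hemiHeight_sub_le hw hw') (abs_nonneg _) ((abs_nonneg b).trans hb)
  nlinarith [norm_nonneg (w - w')]

lemma norm_sampleHess_sub_le {μ : ℝ} (hμ : 0 < μ) {x : E} {b M B : ℝ} (hb : |b| ≤ M)
    (hB : ‖x‖ + 3 / 5 * M ≤ B) {w w' : E} (hw : ‖w‖ < 1 / 2) (hw' : ‖w'‖ < 1 / 2) :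
    ‖sampleHess μ x b w - sampleHess μ x b w'‖
      ≤ (2 / μ ^ 2 * B ^ 3 + 24 / 5 / μ * (B * M) + 4 * M) * ‖w - w'‖ := by
  have hM : 0 ≤ M := (abs_nonneg b).trans hb
  have hB0 : 0 ≤ B := by linarith [norm_nonneg x]
  set T := Real.tanh (hemiInner x b w / μ)
  set T' := Real.tanh (hemiInner x b w' / μ)
  set v := hemiInnerGrad x b w
  set v' := hemiInnerGrad x b w'
  have hvB : ‖v‖ ≤ B := norm_hemiInnerGrad_le hb hB hw
  have hvB' : ‖v'‖ ≤ B := norm_hemiInnerGrad_le hb hB hw'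
  have hvsub : ‖v - v'‖ ≤ M * (8 / 5 * ‖w - w'‖) := norm_hemiInnerGrad_sub_le hb hw hw'
  have hTle : |T| ≤ 1 := (Real.abs_tanh_lt_one _).le
  have hTle' : |T'| ≤ 1 := (Real.abs_tanh_lt_one _).le
  have hTsub : |T - T'| ≤ B / μ * ‖w - w'‖ := by
    refine (Real.abs_tanh_sub_tanh_le _ _).trans ?_
    rw [← sub_div, abs_div, abs_of_pos hμ, div_mul_eq_mul_div]
    gcongr
    exact abs_hemiInner_sub_le hb hB hw hw'
  have hasub : |(1 - T ^ 2) / μ - (1 - T' ^ 2) / μ| ≤ 2 * (B / μ * ‖w - w'‖) / μ := by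
    rw [← sub_div, abs_div, abs_of_pos hμ]
    gcongr
    have : (1 - T ^ 2) - (1 - T' ^ 2) = -((T + T') * (T - T')) := by ring
    rw [this, abs_neg, abs_mul]
    refine mul_le_mul ((abs_add_le _ _).trans (by linarith)) hTsub (abs_nonneg _) (by norm_num)
  have ha' : |(1 - T' ^ 2) / μ| ≤ 1 / μ := by
    rw [abs_div, abs_of_pos hμ]
    gcongr
    rw [abs_of_nonneg (by linarith [Real.tanh_sq_lt_one (hemiInner x b w' / μ)])]
    linarith [sq_nonneg T']
  have hfirst := norm_smul_sub_smul_le ((1 - T ^ 2) / μ) ((1 - T' ^ 2) / μ)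
    (InnerProductSpace.rankOne ℝ v v) (InnerProductSpace.rankOne ℝ v' v')
  have hsecond := norm_smul_sub_smul_le (T * b) (T' * b) (gnomonicDeriv w) (gnomonicDeriv w')
  have hrank : ‖InnerProductSpace.rankOne ℝ v v - InnerProductSpace.rankOne ℝ v' v'‖
      ≤ (B + B) * (M * (8 / 5 * ‖w - w'‖)) := by
    refine (norm_rankOne_self_sub_rankOne_self_le v v').trans ?_
    gcongr
  rw [InnerProductSpace.norm_rankOne] at hfirst
  rw [← sub_mul, abs_mul, abs_mul] at hsecond
  have hfirst' := hfirst.trans (add_le_add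
    (mul_le_mul hasub (mul_le_mul hvB hvB (norm_nonneg _) hB0) (by positivity) (by positivity))
    (mul_le_mul ha' hrank (norm_nonneg _) (by positivity)))
  have hsecond' := hsecond.trans (add_le_add
    (mul_le_mul (mul_le_mul hTsub hb (abs_nonneg _) (by positivity)) (norm_gnomonicDeriv_le hw)
      (norm_nonneg _) (by positivity))
    (mul_le_mul (mul_le_mul hTle' hb (abs_nonneg _) zero_le_one)
      (norm_gnomonicDeriv_sub_le hw hw') (norm_nonneg _) (by positivity)))
  rw [sampleHess, sampleHess, sub_sub_sub_comm]
  refine (norm_sub_le _ _).trans ((add_le_add hfirst' hsecond').trans_eq ?_)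
  field_simp
  ring

end InnerProduct

/-- The first `m` coordinates of the `k`-th column. -/
def colHead {m p : ℕ} (Y : Matrix (Fin (m + 1)) (Fin p) ℝ) (k : Fin p) :
    EuclideanSpace ℝ (Fin m) :=
  WithLp.toLp 2 fun i => Y i.castSucc k

lemma abs_le_Minf {m k : ℕ} (M : Matrix (Fin m) (Fin k) ℝ) (i : Fin m) (j : Fin k) :
    |M i j| ≤ Minf M :=
  (le_ciSup (f := fun j => |M i j|) (Set.finite_range _).bddAbove j).trans
    (le_ciSup (f := fun i => ⨆ j, |M i j|) (Set.finite_range _).bddAbove i)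

lemma Minf_nonneg {m k : ℕ} (M : Matrix (Fin m) (Fin k) ℝ) : 0 ≤ Minf M :=
  Real.iSup_nonneg fun _ => Real.iSup_nonneg fun _ => abs_nonneg _

lemma norm_colHead_le {m p : ℕ} (Y : Matrix (Fin (m + 1)) (Fin p) ℝ) (k : Fin p) :
    ‖colHead Y k‖ ≤ Real.sqrt m * Minf Y := by
  rw [EuclideanSpace.norm_eq]
  refine Real.sqrt_le_iff.2 ⟨mul_nonneg (Real.sqrt_nonneg _) (Minf_nonneg Y), ?_⟩
  rw [mul_pow, Real.sq_sqrt (Nat.cast_nonneg m)]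
  calc _ ≤ ∑ _i : Fin m, Minf Y ^ 2 :=
        Finset.sum_le_sum fun i _ => pow_le_pow_left₀ (norm_nonneg _) (abs_le_Minf Y _ _) 2
    _ = m * Minf Y ^ 2 := by simp

lemma sqrt_mul_add_le (m : ℕ) {M : ℝ} (hM : 0 ≤ M) :
    Real.sqrt m * M + 3 / 5 * M ≤ 6 / 5 * Real.sqrt ((m + 1 : ℕ) : ℝ) * M := by
  rw [← add_mul]
  refine mul_le_mul_of_nonneg_right ?_ hM
  have h1 := Real.sq_sqrt (Nat.cast_nonneg (α := ℝ) m)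
  have h2 := Real.sq_sqrt (Nat.cast_nonneg (α := ℝ) (m + 1))
  push_cast at h2 ⊢
  refine abs_le_of_sq_le_sq' ?_ (by positivity) |>.2
  nlinarith [sq_nonneg (3 / 5 * Real.sqrt m - 1), Nat.cast_nonneg (α := ℝ) m]

lemma gfun_succ_eq (m p : ℕ) (μ : ℝ) (Y : Matrix (Fin (m + 1)) (Fin p) ℝ)
    (w : EuclideanSpace ℝ (Fin m)) :
    gfun (m + 1) p μ Y w
      = (p : ℝ)⁻¹ * ∑ k : Fin p, hmu μ (hemiInner (colHead Y k) (Y (Fin.last m) k) w) := by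
  rw [gfun]
  congr 1
  refine Finset.sum_congr rfl fun k _ => congrArg _ ?_
  rw [Fin.sum_univ_castSucc, hemiInner, PiLp.inner_apply]
  congr 1
  · refine Finset.sum_congr rfl fun i _ => ?_
    simp [qmap, colHead]
  · simp [qmap, hemiHeight, mul_comm]

lemma gradg_succ_eq {m p : ℕ} {μ : ℝ} (hμ : 0 < μ) (Y : Matrix (Fin (m + 1)) (Fin p) ℝ)
    {w : EuclideanSpace ℝ (Fin m)} (hw : ‖w‖ < 1) :
    gradg (m + 1) p μ Y w
      = (p : ℝ)⁻¹ • ∑ k : Fin p, sampleGrad μ (colHead Y k) (Y (Fin.last m) k) w := by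
  refine HasGradientAt.gradient (hasGradientAt_iff_hasFDerivAt.2 ?_)
  have h := (HasFDerivAt.fun_sum (u := Finset.univ) fun k _ =>
    hasFDerivAt_hmu_hemiInner hμ (colHead Y k) (Y (Fin.last m) k) hw).const_mul (p : ℝ)⁻¹
  rw [show gfun (m + 1) p μ Y = _ from funext (gfun_succ_eq m p μ Y)]
  refine h.congr_fderiv ?_
  rw [← map_sum, ← map_smul]
  rfl

lemma hessg_succ_eq {m p : ℕ} {μ : ℝ} (hμ : 0 < μ) (Y : Matrix (Fin (m + 1)) (Fin p) ℝ)
    {w : EuclideanSpace ℝ (Fin m)} (hw : ‖w‖ < 1) :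
    hessg (m + 1) p μ Y w
      = (p : ℝ)⁻¹ • ∑ k : Fin p, sampleHess μ (colHead Y k) (Y (Fin.last m) k) w := by
  have h := (HasFDerivAt.fun_sum (u := Finset.univ) fun k _ =>
    hasFDerivAt_sampleGrad μ (colHead Y k) (Y (Fin.last m) k) hw).const_smul (p : ℝ)⁻¹
  refine (h.congr_of_eventuallyEq ?_).fderiv
  filter_upwards [(isOpen_lt continuous_norm continuous_const).mem_nhds hw] with v hv
  exact gradg_succ_eq hμ Y hv

lemma norm_hessg_succ_sub_le {m p : ℕ} {μ : ℝ} (hμ : 0 < μ) (Y : Matrix (Fin (m + 1)) (Fin p) ℝ)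
    {w w' : EuclideanSpace ℝ (Fin m)} (hw : ‖w‖ < 1 / 2) (hw' : ‖w'‖ < 1 / 2) :
    ‖hessg (m + 1) p μ Y w - hessg (m + 1) p μ Y w'‖
      ≤ (2 / μ ^ 2 * (6 / 5 * Real.sqrt ((m + 1 : ℕ) : ℝ) * Minf Y) ^ 3
        + 24 / 5 / μ * (6 / 5 * Real.sqrt ((m + 1 : ℕ) : ℝ) * Minf Y * Minf Y)
        + 4 * Minf Y) * ‖w - w'‖ := by
  have hM := Minf_nonneg Y
  have heq : hessg (m + 1) p μ Y w - hessg (m + 1) p μ Y w'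
      = (p : ℝ)⁻¹ • ∑ k : Fin p, (sampleHess μ (colHead Y k) (Y (Fin.last m) k) w
        - sampleHess μ (colHead Y k) (Y (Fin.last m) k) w') := by
    rw [Finset.sum_sub_distrib, smul_sub, ← hessg_succ_eq hμ Y (hw.trans (by norm_num)),
      ← hessg_succ_eq hμ Y (hw'.trans (by norm_num))]
  refine (congrArg norm heq).trans_le ?_
  rw [norm_smul, norm_inv, RCLike.norm_natCast]
  refine inv_mul_le_of_le_mul₀ (Nat.cast_nonneg p) (by positivity) ?_
  refine (norm_sum_le _ _).trans ((Finset.sum_le_card_nsmul _ _ _ fun k _ =>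
    norm_sampleHess_sub_le hμ (abs_le_Minf Y (Fin.last m) k)
      ((add_le_add_left (norm_colHead_le Y k) _).trans (sqrt_mul_add_le m hM)) hw
      hw').trans_eq ?_)
  simp

/-- Proposition: Lipschitz property of the Hessian near zero,
in the spectral norm. -/
theorem statement12 (n p : ℕ) (μ r : ℝ) (hμ : 0 < μ) (hr : r ∈ Set.Ioo (0 : ℝ) (1 / 2))
    (X₀ : Matrix (Fin n) (Fin p) ℝ) :
    ∀ w ∈ GammaSet n ∩ {w | ‖w‖ ≤ r}, ∀ w' ∈ GammaSet n ∩ {w | ‖w‖ ≤ r},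
      ‖hessg n p μ X₀ w - hessg n p μ X₀ w'‖ ≤
        (4 * (n : ℝ) ^ 2 / μ ^ 2 * Minf X₀ ^ 3 +
         4 * (n : ℝ) / μ * Minf X₀ ^ 2 +
         8 * Real.sqrt 2 * Real.sqrt n / μ * Minf X₀ ^ 2 +
         8 * Minf X₀) * ‖w - w'‖ := by
  rintro w ⟨-, hw⟩ w' ⟨-, hw'⟩
  have hw2 : ‖w‖ < 1 / 2 := lt_of_le_of_lt hw hr.2
  have hw2' : ‖w'‖ < 1 / 2 := lt_of_le_of_lt hw' hr.2
  rcases n with _ | m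
  · have : w = w' := Subsingleton.elim (α := EuclideanSpace ℝ (Fin 0)) w w'
    simp [this]
  have hM := Minf_nonneg X₀
  set M := Minf X₀
  set s := Real.sqrt ((m + 1 : ℕ) : ℝ)
  have hs0 : 0 ≤ s := Real.sqrt_nonneg _
  have hsq : s ^ 2 = ((m + 1 : ℕ) : ℝ) := Real.sq_sqrt (Nat.cast_nonneg _)
  have hs1 : 1 ≤ s := Real.one_le_sqrt.2 (by exact_mod_cast Nat.succ_le_succ (Nat.zero_le m))
  refine (norm_hessg_succ_sub_le hμ X₀ hw2 hw2').trans
    (mul_le_mul_of_nonneg_right ?_ (norm_nonneg _))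
  have h2 : (1 : ℝ) ≤ Real.sqrt 2 := Real.one_le_sqrt.2 (by norm_num)
  have hcube : 2 / μ ^ 2 * (6 / 5 * s * M) ^ 3 ≤ 4 * ((m + 1 : ℕ) : ℝ) ^ 2 / μ ^ 2 * M ^ 3 := by
    have hs34 : s ^ 3 ≤ s ^ 4 := pow_le_pow_right₀ hs1 (by norm_num)
    calc 2 / μ ^ 2 * (6 / 5 * s * M) ^ 3 = 432 / 125 * s ^ 3 * (M ^ 3 / μ ^ 2) := by ring
      _ ≤ 4 * s ^ 4 * (M ^ 3 / μ ^ 2) := by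
        refine mul_le_mul_of_nonneg_right ?_ (by positivity)
        nlinarith [pow_nonneg hs0 3]
      _ = _ := by rw [← hsq]; ring
  have hmid : 24 / 5 / μ * (6 / 5 * s * M * M) ≤ 8 * Real.sqrt 2 * s / μ * M ^ 2 := by
    calc 24 / 5 / μ * (6 / 5 * s * M * M) = 144 / 25 * s * (M ^ 2 / μ) := by ring
      _ ≤ 8 * Real.sqrt 2 * s * (M ^ 2 / μ) := by
        gcongr
        linarith
      _ = _ := by ring
  have hdrop : 0 ≤ 4 * ((m + 1 : ℕ) : ℝ) / μ * M ^ 2 := by positivity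
  refine (add_le_add_three hcube hmid (le_refl (4 * M))).trans ?_
  linarith

end
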